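/- arXiv:2208.09627 — 2 statements merged into one kernel-verified Lean document; each statement's English description precedes it below -/
import Mathlib

section
/- Let θ and Z be independent real random variables, where θ is uniformly distributed on [−π, π] and Z has probability density f(z) = (2π − |z|)/(4π²) on [−2π, 2π] (and 0 elsewhere). Then P(cos(Z − θ) ≥ 0) = 1/2; that is, the probability that the wrapped phase of Z lies within the half-circle of angular width π centered at the wrapped phase of θ equals 1/2. -/
open MeasureTheory ProbabilityTheory Real Set

/-!
Wrapping the uniform angle `θ` onto the circle gives a Haar-distributed point. Haar probability
absorbs any independent summand under convolution, so the wrapped phase difference `Z - θ` is again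
Haar-distributed, whatever the law of `Z`. Since `cos x` is the cosine of the distance from `x` to
`2πℤ`, the event `0 ≤ cos (Z - θ)` is that this point falls in the closed ball of radius `π / 2`
about `0`, which has Haar probability `1 / 2`.
-/

section Convolution

variable {G : Type*} [MeasurableSpace G]

theorem conv_eq_measure_univ_smul [AddMonoid G] [MeasurableAdd₂ G] (μ ν : Measure G) [SFinite ν]
    [ν.IsAddLeftInvariant] : μ.conv ν = μ univ • ν := by
  refine Measure.ext_of_lintegral _ fun f hf ↦ ?_
  calc ∫⁻ x, f x ∂(μ.conv ν)
      = ∫⁻ x, ∫⁻ y, f (x + y) ∂ν ∂μ := Measure.lintegral_conv hf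
    _ = ∫⁻ _, ∫⁻ y, f y ∂ν ∂μ := by simp only [(measurePreserving_add_left ν _).lintegral_comp hf]
    _ = ∫⁻ x, f x ∂(μ univ • ν) := by
      rw [lintegral_const, lintegral_smul_measure, smul_eq_mul, mul_comm]

theorem hasLaw_sub_of_indepFun [AddGroup G] [MeasurableAdd₂ G] [MeasurableNeg G]
    {Ω : Type*} [MeasurableSpace Ω] {P : Measure Ω} {ν : Measure G} [IsProbabilityMeasure ν]
    [ν.IsAddLeftInvariant] [ν.IsNegInvariant] {X Y : Ω → G} (hX : AEMeasurable X P)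
    (hY : HasLaw Y ν P) (hXY : IndepFun X Y P) : HasLaw (fun ω ↦ X ω - Y ω) ν P := by
  have := hY.isProbabilityMeasure
  have := Measure.isProbabilityMeasure_map hX
  have hneg : HasLaw (fun ω ↦ -Y ω) ν P := (Measure.measurePreserving_neg ν).fun_comp_hasLaw hY
  have hadd := (hXY.comp measurable_id measurable_neg).hasLaw_fun_add ⟨hX, rfl⟩ hneg
  simpa only [conv_eq_measure_univ_smul, measure_univ, one_smul, id, Function.comp_apply,
    ← sub_eq_add_neg] using hadd

end Convolution

section Circle

variable {T : ℝ} [Fact (0 < T)]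

theorem haarAddCircle_eq_inv_smul_volume :
    (AddCircle.haarAddCircle : Measure (AddCircle T)) = (ENNReal.ofReal T)⁻¹ • volume := by
  have hT : ENNReal.ofReal T ≠ 0 := (ENNReal.ofReal_pos.2 Fact.out).ne'
  rw [AddCircle.volume_eq_smul_haarAddCircle, smul_smul,
    ENNReal.inv_mul_cancel hT ENNReal.ofReal_ne_top, one_smul]

theorem haarAddCircle_closedBall (x : AddCircle T) (r : ℝ) :
    AddCircle.haarAddCircle (Metric.closedBall x r) = ENNReal.ofReal (min T (2 * r) / T) := by
  rw [haarAddCircle_eq_inv_smul_volume, Measure.smul_apply, AddCircle.volume_closedBall,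
    ENNReal.ofReal_div_of_pos Fact.out, smul_eq_mul, mul_comm, div_eq_mul_inv]

theorem measurePreserving_coe_cond_Icc (a : ℝ) :
    MeasurePreserving ((↑) : ℝ → AddCircle T) (volume[|Icc a (a + T)])
      AddCircle.haarAddCircle := by
  rw [ProbabilityTheory.cond, Real.volume_Icc, add_sub_cancel_left, ← restrict_Ioc_eq_restrict_Icc,
    haarAddCircle_eq_inv_smul_volume]
  exact (AddCircle.measurePreserving_mk T a).smul_measure _

theorem hasLaw_coe_of_isUniform_Icc {Ω : Type*} [MeasurableSpace Ω] {P : Measure Ω} {X : Ω → ℝ}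
    {a : ℝ} (hX : pdf.IsUniform X (Icc a (a + T)) P) :
    HasLaw (fun ω ↦ (X ω : AddCircle T)) AddCircle.haarAddCircle P := by
  have hpos : volume (Icc a (a + T)) ≠ 0 := by
    rw [Real.volume_Icc, add_sub_cancel_left]
    exact (ENNReal.ofReal_pos.2 Fact.out).ne'
  exact (measurePreserving_coe_cond_Icc a).fun_comp_hasLaw
    ⟨hX.aemeasurable hpos measure_Icc_lt_top.ne, hX⟩

end Circle

section Cosine

theorem cos_norm_coe_addCircle (x : ℝ) : cos ‖(x : AddCircle (2 * π))‖ = cos x := by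
  rw [AddCircle.norm_eq, cos_abs, cos_sub_int_mul_two_pi]

theorem cos_le_cos_iff_norm_coe_le {α : ℝ} (hα : α ∈ Icc 0 π) (x : ℝ) :
    cos α ≤ cos x ↔ ‖(x : AddCircle (2 * π))‖ ≤ α := by
  have hnorm : ‖(x : AddCircle (2 * π))‖ ≤ π := by
    simpa [abs_of_pos pi_pos] using AddCircle.norm_le_half_period (2 * π) two_pi_pos.ne'
  rw [← cos_norm_coe_addCircle x, strictAntiOn_cos.le_iff_ge hα ⟨norm_nonneg _, hnorm⟩]

theorem cos_nonneg_iff_coe_mem_closedBall (x : ℝ) :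
    0 ≤ cos x ↔ (x : AddCircle (2 * π)) ∈ Metric.closedBall 0 (π / 2) := by
  rw [mem_closedBall_zero_iff, ← cos_pi_div_two]
  exact cos_le_cos_iff_norm_coe_le ⟨by positivity, half_le_self pi_pos.le⟩ x

end Cosine

theorem activation_probability_eq_half_general {Ω : Type*} [MeasurableSpace Ω] {P : Measure Ω}
    {θ Z : Ω → ℝ} {a : ℝ} (hθ : pdf.IsUniform θ (Icc a (a + 2 * π)) P) (hZ : AEMeasurable Z P)
    (hindep : IndepFun θ Z P) : P {ω | 0 ≤ cos (Z ω - θ ω)} = 1 / 2 := by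
  have : Fact (0 < 2 * π) := ⟨two_pi_pos⟩
  have hcoe : Measurable ((↑) : ℝ → AddCircle (2 * π)) := AddCircle.measurable_mk'
  have hdiff : HasLaw (fun ω ↦ (Z ω : AddCircle (2 * π)) - θ ω) AddCircle.haarAddCircle P :=
    hasLaw_sub_of_indepFun (hcoe.comp_aemeasurable hZ) (hasLaw_coe_of_isUniform_Icc hθ)
      (hindep.symm.comp hcoe hcoe)
  have hratio : min (2 * π) (2 * (π / 2)) / (2 * π) = 1 / 2 := by
    rw [min_eq_right (by linarith [pi_pos])]
    field_simp
  calc P {ω | 0 ≤ cos (Z ω - θ ω)}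
      = P {ω | (Z ω : AddCircle (2 * π)) - θ ω ∈ Metric.closedBall 0 (π / 2)} := by
        simp only [cos_nonneg_iff_coe_mem_closedBall, AddCircle.coe_sub]
    _ = AddCircle.haarAddCircle (Metric.closedBall (0 : AddCircle (2 * π)) (π / 2)) :=
        hdiff.measure_eq measurableSet_closedBall
    _ = 1 / 2 := by
        rw [haarAddCircle_closedBall, hratio, ENNReal.ofReal_div_of_pos two_pos,
          ENNReal.ofReal_one, ENNReal.ofReal_ofNat]

/-- If `θ` is uniform on `[-π, π]`, `Z` has the triangular density
`(2π - |z|)/(4π²)` on `[-2π, 2π]`, and `θ`, `Z` are independent, then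
`P(cos (Z - θ) ≥ 0) = 1/2` (the asymptotic activation probability). -/
theorem activation_probability_eq_half
    {Ω : Type*} [MeasureSpace Ω] [IsProbabilityMeasure (ℙ : Measure Ω)]
    (θ Z : Ω → ℝ) (hmθ : Measurable θ) (hmZ : Measurable Z)
    (hindep : IndepFun θ Z ℙ)
    (hθ : (ℙ : Measure Ω).map θ
        = (ENNReal.ofReal (2 * π))⁻¹ • (volume.restrict (Icc (-π) π)))
    (hZ : (ℙ : Measure Ω).map Z
        = volume.withDensity
            (fun z => ENNReal.ofReal
              (indicator (Icc (-(2 * π)) (2 * π)) (fun z => (2 * π - |z|) / (4 * π ^ 2)) z))) :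
    ℙ {ω | 0 ≤ Real.cos (Z ω - θ ω)} = 1 / 2 := by
  have hunif : pdf.IsUniform θ (Icc (-π) (-π + 2 * π)) ℙ := by
    rw [pdf.IsUniform, hθ, ProbabilityTheory.cond, Real.volume_Icc, add_sub_cancel_left,
      two_mul, neg_add_cancel_left]
  exact activation_probability_eq_half_general hunif hmZ.aemeasurable hindep
end

section
/- Let X_1, …, X_N be pairwise independent random variables on a probability space, each taking values in {0, 1} with P(X_n = 1) = p for every n, where 0 < p < 1, and let S = Σ_{n=1}^N X_n. Let t be a positive integer with (N − 1)p ≤ t ≤ 1 + (N − 1)p. Then P(S ≥ t) ≤ ((N − 1)(1 − p) + t)·p / t; consequently P(S ≤ t) ≥ 1 − ((N − 1)(1 − p) + t)·p / t. -/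
open MeasureTheory ProbabilityTheory

/-!
The concave parabola `s ↦ s * (N + t - s)` is nonnegative on `[0, N]` and takes the value `t * N`
at both `t` and `N`, so it is at least `t * N` on `[t, N]`. Markov's inequality for this polynomial
in `S` bounds `t * N * P(S ≥ t)` by `(N + t) * E[S] - E[S ^ 2]`. For `{0, 1}`-valued summands with
mean `p` and nonnegative pairwise covariances, `E[S] = N * p` and
`E[S ^ 2] ≥ N * p * (1 - p) + (N * p) ^ 2`.
-/

section

variable {Ω ι : Type*} {mΩ : MeasurableSpace Ω} {μ : Measure Ω}

lemma mul_measureReal_ge_le_sub_integral_sq [IsFiniteMeasure μ] {S : Ω → ℝ} {b t : ℝ}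
    (hS : AEMeasurable S μ) (hSb : ∀ᵐ ω ∂μ, S ω ∈ Set.Icc 0 b) (ht : 0 ≤ t) :
    t * b * μ.real {ω | t ≤ S ω} ≤ (b + t) * μ[S] - μ[S ^ 2] := by
  obtain rfl | _ := eq_zero_or_neZero μ
  · simp
  obtain ⟨_, h0, hb⟩ := hSb.exists
  have htb : 0 ≤ t * b := mul_nonneg ht (h0.trans hb)
  have hS2 : MemLp S 2 μ := memLp_of_bounded hSb hS.aestronglyMeasurable 2
  have hlin : Integrable (fun ω ↦ (b + t) * S ω) μ := (hS2.integrable one_le_two).const_mul _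
  have hnonneg : 0 ≤ᵐ[μ] fun ω ↦ (b + t) * S ω - S ω ^ 2 := by
    filter_upwards [hSb] with ω ⟨h0, hb⟩
    calc (0 : ℝ) ≤ S ω * (b - S ω + t) := mul_nonneg h0 (add_nonneg (sub_nonneg.2 hb) ht)
      _ = (b + t) * S ω - S ω ^ 2 := by ring
  have hsub : {ω | t ≤ S ω} ≤ᵐ[μ] {ω | t * b ≤ (b + t) * S ω - S ω ^ 2} := by
    filter_upwards [hSb] with ω ⟨_, hb⟩ (hω : t ≤ S ω)
    have hprod : 0 ≤ (S ω - t) * (b - S ω) := mul_nonneg (sub_nonneg.2 hω) (sub_nonneg.2 hb)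
    change t * b ≤ (b + t) * S ω - S ω ^ 2
    linarith
  calc t * b * μ.real {ω | t ≤ S ω}
      ≤ t * b * μ.real {ω | t * b ≤ (b + t) * S ω - S ω ^ 2} :=
        mul_le_mul_of_nonneg_left
          (ENNReal.toReal_mono (measure_ne_top _ _) (measure_mono_ae hsub)) htb
    _ ≤ ∫ ω, ((b + t) * S ω - S ω ^ 2) ∂μ :=
        mul_meas_ge_le_integral_of_nonneg hnonneg (hlin.sub hS2.integrable_sq) _
    _ = (b + t) * μ[S] - μ[S ^ 2] := by
        rw [integral_sub hlin hS2.integrable_sq, integral_const_mul]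
        rfl

lemma integral_sum_eq_card_mul [Fintype ι] {X : ι → Ω → ℝ} {m : ℝ}
    (hX : ∀ i, Integrable (X i) μ) (hm : ∀ i, μ[X i] = m) :
    μ[∑ i, X i] = Fintype.card ι * m := by
  simp [integral_finsetSum _ fun i _ ↦ hX i, hm]

lemma sum_variance_le_variance_sum_of_covariance_nonneg [IsFiniteMeasure μ] [Fintype ι]
    {X : ι → Ω → ℝ} (hX : ∀ i, MemLp (X i) 2 μ)
    (hcov : Pairwise fun i j ↦ 0 ≤ cov[X i, X j; μ]) :
    ∑ i, Var[X i; μ] ≤ Var[∑ i, X i; μ] := by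
  rw [variance_sum hX]
  refine Finset.sum_le_sum fun i _ ↦ ?_
  rw [← covariance_self (hX i).aemeasurable]
  refine Finset.single_le_sum (f := fun j ↦ cov[X i, X j; μ]) (fun j _ ↦ ?_) (Finset.mem_univ i)
  obtain rfl | hij := eq_or_ne i j
  · exact covariance_self (hX i).aemeasurable ▸ variance_nonneg _ _
  · exact hcov hij

lemma ae_mem_Icc_of_ae_zero_or_one {Y : Ω → ℝ} (h01 : ∀ᵐ ω ∂μ, Y ω = 0 ∨ Y ω = 1) :
    ∀ᵐ ω ∂μ, Y ω ∈ Set.Icc 0 1 := by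
  filter_upwards [h01] with ω hω
  rcases hω with h | h <;> simp [h]

lemma memLp_of_ae_zero_or_one [IsFiniteMeasure μ] {Y : Ω → ℝ} (hY : AEMeasurable Y μ)
    (h01 : ∀ᵐ ω ∂μ, Y ω = 0 ∨ Y ω = 1) (q : ENNReal) : MemLp Y q μ :=
  memLp_of_bounded (ae_mem_Icc_of_ae_zero_or_one h01) hY.aestronglyMeasurable q

lemma integral_eq_measureReal_of_ae_zero_or_one {Y : Ω → ℝ} (hY : AEMeasurable Y μ)
    (h01 : ∀ᵐ ω ∂μ, Y ω = 0 ∨ Y ω = 1) : μ[Y] = μ.real {ω | Y ω = 1} := by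
  have hind : Y =ᵐ[μ] {ω | Y ω = 1}.indicator 1 := by
    filter_upwards [h01] with ω hω
    rcases hω with h | h <;> simp [Set.indicator, h]
  have hmeas : NullMeasurableSet {ω | Y ω = 1} μ :=
    hY.nullMeasurableSet_preimage (measurableSet_singleton 1)
  rw [integral_congr_ae hind, integral_indicator₀ hmeas]
  simp

lemma variance_of_ae_zero_or_one [IsProbabilityMeasure μ] {Y : Ω → ℝ} (hY : AEMeasurable Y μ)
    (h01 : ∀ᵐ ω ∂μ, Y ω = 0 ∨ Y ω = 1) : Var[Y; μ] = μ[Y] * (1 - μ[Y]) := by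
  have hsq : Y ^ 2 =ᵐ[μ] Y := by
    filter_upwards [h01] with ω hω
    rcases hω with h | h <;> simp [h]
  rw [variance_eq_sub (memLp_of_ae_zero_or_one hY h01 2), integral_congr_ae hsq]
  ring

variable [IsProbabilityMeasure μ] [Fintype ι] {X : ι → Ω → ℝ} {p t : ℝ}

lemma le_integral_sq_sum_of_ae_zero_or_one (hX : ∀ i, AEMeasurable (X i) μ)
    (h01 : ∀ i, ∀ᵐ ω ∂μ, X i ω = 0 ∨ X i ω = 1) (hp : ∀ i, μ[X i] = p)
    (hcov : Pairwise fun i j ↦ 0 ≤ cov[X i, X j; μ]) :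
    Fintype.card ι * (p * (1 - p)) + (Fintype.card ι * p) ^ 2 ≤ μ[(∑ i, X i) ^ 2] := by
  have hX2 (i : ι) : MemLp (X i) 2 μ := memLp_of_ae_zero_or_one (hX i) (h01 i) 2
  have hvar : Fintype.card ι * (p * (1 - p)) ≤ Var[∑ i, X i; μ] := by
    simpa [variance_of_ae_zero_or_one (hX _) (h01 _), hp] using
      sum_variance_le_variance_sum_of_covariance_nonneg hX2 hcov
  rw [variance_eq_sub (memLp_finsetSum' _ fun i _ ↦ hX2 i),
    integral_sum_eq_card_mul (fun i ↦ (hX2 i).integrable one_le_two) hp] at hvar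
  linarith

lemma measureReal_sum_ge_le_of_ae_zero_or_one [Nonempty ι] (hX : ∀ i, AEMeasurable (X i) μ)
    (h01 : ∀ i, ∀ᵐ ω ∂μ, X i ω = 0 ∨ X i ω = 1) (hp : ∀ i, μ[X i] = p)
    (hcov : Pairwise fun i j ↦ 0 ≤ cov[X i, X j; μ]) (ht : 0 < t) :
    μ.real {ω | t ≤ ∑ i, X i ω} ≤ ((Fintype.card ι - 1) * (1 - p) + t) * p / t := by
  have hsumIcc : ∀ᵐ ω ∂μ, (∑ i, X i) ω ∈ Set.Icc (0 : ℝ) (Fintype.card ι) := by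
    filter_upwards [ae_all_iff.2 fun i ↦ ae_mem_Icc_of_ae_zero_or_one (h01 i)] with ω hω
    rw [Finset.sum_apply]
    exact ⟨Finset.sum_nonneg fun i _ ↦ (hω i).1,
      (Finset.sum_le_card_nsmul _ _ 1 fun i _ ↦ (hω i).2).trans_eq (by simp)⟩
  have hmean : μ[∑ i, X i] = Fintype.card ι * p :=
    integral_sum_eq_card_mul
      (fun i ↦ (memLp_of_ae_zero_or_one (hX i) (h01 i) 1).integrable le_rfl) hp
  have hmarkov := mul_measureReal_ge_le_sub_integral_sq
    (Finset.aemeasurable_sum _ fun i _ ↦ hX i) hsumIcc ht.le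
  have hsq := le_integral_sq_sum_of_ae_zero_or_one hX h01 hp hcov
  have hcard : (0 : ℝ) < Fintype.card ι := mod_cast Fintype.card_pos
  rw [hmean] at hmarkov
  simp only [Finset.sum_apply] at hmarkov
  rw [le_div_iff₀ ht]
  refine le_of_mul_le_mul_left ?_ hcard
  calc Fintype.card ι * (μ.real {ω | t ≤ ∑ i, X i ω} * t)
      = t * Fintype.card ι * μ.real {ω | t ≤ ∑ i, X i ω} := by ring
    _ ≤ (Fintype.card ι + t) * (Fintype.card ι * p) - μ[(∑ i, X i) ^ 2] := hmarkov
    _ ≤ (Fintype.card ι + t) * (Fintype.card ι * p)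
          - (Fintype.card ι * (p * (1 - p)) + (Fintype.card ι * p) ^ 2) := sub_le_sub_left hsq _
    _ = Fintype.card ι * (((Fintype.card ι - 1) * (1 - p) + t) * p) := by ring

theorem pairwise_independent_bernoulli_tail_bound_general [Nonempty ι]
    (hX : ∀ i, AEMeasurable (X i) μ) (h01 : ∀ i, ∀ᵐ ω ∂μ, X i ω = 0 ∨ X i ω = 1)
    (hcov : Pairwise fun i j ↦ 0 ≤ cov[X i, X j; μ])
    (hp : ∀ i, μ.real {ω | X i ω = 1} = p) (ht : 0 < t) :
    μ {ω | t ≤ ∑ i, X i ω}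
        ≤ ENNReal.ofReal (((Fintype.card ι - 1) * (1 - p) + t) * p / t) ∧
    1 - ENNReal.ofReal (((Fintype.card ι - 1) * (1 - p) + t) * p / t)
        ≤ μ {ω | ∑ i, X i ω ≤ t} := by
  have hmean (i : ι) : μ[X i] = p :=
    (integral_eq_measureReal_of_ae_zero_or_one (hX i) (h01 i)).trans (hp i)
  have hupper : μ {ω | t ≤ ∑ i, X i ω}
      ≤ ENNReal.ofReal (((Fintype.card ι - 1) * (1 - p) + t) * p / t) := by
    rw [← ofReal_measureReal]
    exact ENNReal.ofReal_le_ofReal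
      (measureReal_sum_ge_le_of_ae_zero_or_one hX h01 hmean hcov ht)
  refine ⟨hupper, tsub_le_iff_left.2 ?_⟩
  have hcover : {ω | t ≤ ∑ i, X i ω} ∪ {ω | ∑ i, X i ω ≤ t} = Set.univ :=
    Set.eq_univ_of_forall fun ω ↦ le_total t (∑ i, X i ω)
  calc 1 = μ ({ω | t ≤ ∑ i, X i ω} ∪ {ω | ∑ i, X i ω ≤ t}) := by rw [hcover, measure_univ]
    _ ≤ μ {ω | t ≤ ∑ i, X i ω} + μ {ω | ∑ i, X i ω ≤ t} := measure_union_le _ _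
    _ ≤ ENNReal.ofReal (((Fintype.card ι - 1) * (1 - p) + t) * p / t)
          + μ {ω | ∑ i, X i ω ≤ t} := by gcongr

end

/-- Tail bound for a sum `S` of pairwise independent Bernoulli(`p`)
random variables: for a positive integer threshold `t` with
`(N-1)p ≤ t ≤ 1 + (N-1)p`, one has `P(S ≥ t) ≤ ((N-1)(1-p) + t)·p/t`, hence
`P(S ≤ t) ≥ 1 − ((N-1)(1-p) + t)·p/t`. -/
theorem pairwise_independent_bernoulli_tail_bound
    {Ω : Type*} [MeasureSpace Ω] [IsProbabilityMeasure (ℙ : Measure Ω)]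
    (N : ℕ) (X : Fin N → Ω → ℝ) (hmX : ∀ n, Measurable (X n))
    (hpair : ∀ i j : Fin N, i ≠ j → IndepFun (X i) (X j) ℙ)
    (hval : ∀ n ω, X n ω = 0 ∨ X n ω = 1)
    (p : ℝ) (hp0 : 0 < p) (hp1 : p < 1)
    (hp : ∀ n, ℙ {ω | X n ω = 1} = ENNReal.ofReal p)
    (t : ℕ) (ht : 0 < t)
    (htlo : ((N : ℝ) - 1) * p ≤ t) (hthi : (t : ℝ) ≤ 1 + ((N : ℝ) - 1) * p) :
    ℙ {ω | (t : ℝ) ≤ ∑ n : Fin N, X n ω}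
        ≤ ENNReal.ofReal ((((N : ℝ) - 1) * (1 - p) + t) * p / t) ∧
    1 - ENNReal.ofReal ((((N : ℝ) - 1) * (1 - p) + t) * p / t)
        ≤ ℙ {ω | ∑ n : Fin N, X n ω ≤ t} := by
  have ht1 : (1 : ℝ) ≤ t := Nat.one_le_cast.2 ht
  have hNp : 0 < N * p := by linarith
  have : Nonempty (Fin N) :=
    Fin.pos_iff_nonempty.1 (Nat.cast_pos.1 (pos_of_mul_pos_left hNp hp0.le))
  have hX (n : Fin N) : AEMeasurable (X n) ℙ := (hmX n).aemeasurable
  have h01 (n : Fin N) : ∀ᵐ ω, X n ω = 0 ∨ X n ω = 1 := ae_of_all _ (hval n)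
  have hcov : Pairwise fun i j ↦ 0 ≤ cov[X i, X j; ℙ] := fun i j hij ↦
    ((hpair i j hij).covariance_eq_zero (memLp_of_ae_zero_or_one (hX i) (h01 i) 2)
      (memLp_of_ae_zero_or_one (hX j) (h01 j) 2)).ge
  simpa using pairwise_independent_bernoulli_tail_bound_general hX h01 hcov
    (fun n ↦ by rw [measureReal_def, hp, ENNReal.toReal_ofReal hp0.le]) (zero_lt_one.trans_le ht1)
end
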